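/- arXiv:2507.09290 — 4 statements merged into one kernel-verified Lean document; each statement's English description precedes it below -/
import Mathlib

section
/- Fix an integer e ≥ 2, and for an integer q ≥ 2 and an integer k ≥ 2 set U(q,k) = ∏_{i=1}^{e} q^{3^{i−1}k}·(q^{3^i k}−1), which is the cardinality of the cyclic subspace code in G_q(3^e k, k) with minimum distance 2k−2 obtained by the nesting construction (so this family is asymptotically optimal with respect to the Johnson type bound II). Then: (i) for every fixed integer q ≥ 2, the quotient J_q(3^e k, 2k−2, k) / U(q,k) tends to 1 as k tends to infinity; (ii) for every fixed integer k ≥ 2, the quotient J_q(3^e k, 2k−2, k) / U(q,k) tends to 1 as the integer q tends to infinity. -/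
/-!
Both limits are instances of one statement about functions `Q, K : α → ℕ` along a filter `l`, where
eventually `2 ≤ Q` and `2 ≤ K`, and `Q ^ (K - 1) → ∞`. With `n = 3 ^ e * K`, both the Johnson bound
and the code size are asymptotic to `Q ^ (n - K) * Q ^ (n - K)`. The key input is
`(Q ^ m - 1) / Q ^ m → 1` whenever eventually `K - 1 ≤ m` (`tendsto_pow_sub_one_div`).

For the Johnson bound, both fractions are asymptotic to `Q ^ (n - K)`, and rounding down changes a
quantity by less than `1`, which is negligible after division by something tending to infinity
(`tendsto_floor_div`). For the code size, dividing factor by factor leaves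
`∏ (Q ^ (3 ^ i * K) - 1) / Q ^ (3 ^ i * K)`, since the exponents satisfy
`∑ (3 ^ (i - 1) + 3 ^ i) = 2 * (3 ^ e - 1)` (`prod_pow_eq`).
-/

open Filter

/-- The Johnson type bound II for constant-dimension subspace codes of minimum
distance `2k-2`:
`J_q(n,2k-2,k) = ⌊((q^n-1)/(q^k-1))·⌊(q^{n-1}-1)/(q^{k-1}-1)⌋⌋`,
with real divisions and floors. -/
noncomputable def Jbound (q n k : ℕ) : ℤ :=
  ⌊(((q : ℝ) ^ n - 1) / ((q : ℝ) ^ k - 1)) *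
    ((⌊(((q : ℝ) ^ (n - 1) - 1) / ((q : ℝ) ^ (k - 1) - 1))⌋ : ℤ) : ℝ)⌋

/-- Size of the nested code in `G_q(3^e k, k)`:
`U(q,k) = ∏_{i=1}^{e} q^{3^{i-1}k}·(q^{3^i k}-1)`. -/
def Usize (e q k : ℕ) : ℕ :=
  ∏ i ∈ Finset.Icc 1 e, q ^ (3 ^ (i - 1) * k) * (q ^ (3 ^ i * k) - 1)

/-- Rounding down does not affect an asymptotic equivalence with a function tending to infinity. -/
lemma tendsto_floor_div {α : Type*} {l : Filter α} {f g : α → ℝ} (hg : Tendsto g l atTop)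
    (h : Tendsto (fun x => f x / g x) l (nhds 1)) :
    Tendsto (fun x => ((⌊f x⌋ : ℤ) : ℝ) / g x) l (nhds 1) := by
  have h2 : Tendsto (fun x => f x / g x - (g x)⁻¹) l (nhds 1) := by
    simpa using h.sub hg.inv_tendsto_atTop
  refine tendsto_of_tendsto_of_tendsto_of_le_of_le' h2 h ?_ ?_
  · filter_upwards [hg.eventually_gt_atTop 0] with x hx
    rw [inv_eq_one_div, ← sub_div]
    exact div_le_div_of_nonneg_right (Int.sub_one_lt_floor _).le hx.le
  · filter_upwards [hg.eventually_gt_atTop 0] with x hx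
    exact div_le_div_of_nonneg_right (Int.floor_le _) hx.le

lemma tendsto_pow_of_le {α : Type*} {l : Filter α} {Q K m : α → ℕ}
    (hQ : ∀ᶠ x in l, 2 ≤ Q x) (hm : ∀ᶠ x in l, K x - 1 ≤ m x)
    (h : Tendsto (fun x => (Q x : ℝ) ^ (K x - 1)) l atTop) :
    Tendsto (fun x => (Q x : ℝ) ^ m x) l atTop := by
  refine tendsto_atTop_mono' l ?_ h
  filter_upwards [hQ, hm] with x hx hmx
  have h1 : (1 : ℝ) ≤ Q x := by exact_mod_cast (by omega : 1 ≤ Q x)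
  exact pow_le_pow_right₀ h1 hmx

lemma tendsto_pow_sub_one_div {α : Type*} {l : Filter α} {Q K m : α → ℕ}
    (hQ : ∀ᶠ x in l, 2 ≤ Q x) (hm : ∀ᶠ x in l, K x - 1 ≤ m x)
    (h : Tendsto (fun x => (Q x : ℝ) ^ (K x - 1)) l atTop) :
    Tendsto (fun x => ((Q x : ℝ) ^ m x - 1) / (Q x : ℝ) ^ m x) l (nhds 1) := by
  have ht := (tendsto_pow_of_le hQ hm h).inv_tendsto_atTop
  have h2 : Tendsto (fun x => 1 - ((Q x : ℝ) ^ m x)⁻¹) l (nhds 1) := by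
    simpa using (tendsto_const_nhds (x := (1 : ℝ))).sub ht
  refine h2.congr' ?_
  filter_upwards [hQ] with x hx
  have h1 : (Q x : ℝ) ≠ 0 := by exact_mod_cast (by omega : Q x ≠ 0)
  field_simp

/-- A quotient `(Q ^ a - 1) / (Q ^ b - 1)` is asymptotic to `Q ^ c` when `a = b + c` and
`b` is at least `K - 1`, so that the subtracted ones are negligible. -/
lemma tendsto_quot {α : Type*} {l : Filter α} {Q K a b c : α → ℕ}
    (hQ : ∀ᶠ x in l, 2 ≤ Q x) (hb : ∀ᶠ x in l, K x - 1 ≤ b x)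
    (habc : ∀ᶠ x in l, a x = b x + c x)
    (h : Tendsto (fun x => (Q x : ℝ) ^ (K x - 1)) l atTop) :
    Tendsto (fun x => ((Q x : ℝ) ^ a x - 1) / ((Q x : ℝ) ^ b x - 1) / (Q x : ℝ) ^ c x)
      l (nhds 1) := by
  have ha : ∀ᶠ x in l, K x - 1 ≤ a x := by
    filter_upwards [hb, habc] with x h1 h2
    omega
  have ht := (tendsto_pow_sub_one_div hQ ha h).div (tendsto_pow_sub_one_div hQ hb h) one_ne_zero
  rw [div_one] at ht
  refine ht.congr' ?_
  filter_upwards [hQ, habc, (tendsto_pow_of_le hQ hb h).eventually_gt_atTop 1] with x hx hx2 hx3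
  have h1 : (Q x : ℝ) ≠ 0 := by exact_mod_cast (by omega : Q x ≠ 0)
  have h2 : (Q x : ℝ) ^ b x - 1 ≠ 0 := by linarith
  have h3 : (Q x : ℝ) ^ a x = (Q x : ℝ) ^ b x * (Q x : ℝ) ^ c x := by rw [hx2, pow_add]
  simp only [Pi.div_apply]
  rw [h3]
  field_simp

lemma prod_pow_eq (e k : ℕ) (q : ℝ) :
    ∏ i ∈ Finset.Icc 1 e, q ^ (3 ^ (i - 1) * k) * q ^ (3 ^ i * k)
      = q ^ ((3 ^ e - 1) * k) * q ^ ((3 ^ e - 1) * k) := by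
  induction e with
  | zero => simp
  | succ e ih =>
    rw [Finset.prod_Icc_succ_top (by omega), ih]
    simp only [← pow_add]
    congr 1
    obtain ⟨t, ht⟩ : ∃ t, 3 ^ e = t + 1 :=
      ⟨3 ^ e - 1, (Nat.sub_add_cancel (Nat.one_le_pow _ _ (by norm_num))).symm⟩
    have h2 : 3 * (t + 1) - 1 = 3 * t + 2 := by omega
    simp only [Nat.add_sub_cancel, pow_succ', ht, h2]
    ring

lemma tendsto_Usize {α : Type*} {l : Filter α} {Q K : α → ℕ} (e : ℕ)
    (hQ : ∀ᶠ x in l, 2 ≤ Q x)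
    (h : Tendsto (fun x => (Q x : ℝ) ^ (K x - 1)) l atTop) :
    Tendsto (fun x => (Usize e (Q x) (K x) : ℝ) /
      ((Q x : ℝ) ^ ((3 ^ e - 1) * K x) * (Q x : ℝ) ^ ((3 ^ e - 1) * K x))) l (nhds 1) := by
  have ht : Tendsto (fun x => ∏ i ∈ Finset.Icc 1 e,
      ((Q x : ℝ) ^ (3 ^ i * K x) - 1) / (Q x : ℝ) ^ (3 ^ i * K x)) l
      (nhds (∏ i ∈ Finset.Icc 1 e, 1)) := by
    refine tendsto_finsetProd _ fun i _ => ?_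
    refine tendsto_pow_sub_one_div hQ (Eventually.of_forall fun x => ?_) h
    have : 1 * K x ≤ 3 ^ i * K x := Nat.mul_le_mul_right _ (Nat.one_le_pow _ _ (by norm_num))
    omega
  rw [Finset.prod_const_one] at ht
  refine ht.congr' ?_
  filter_upwards [hQ] with x hx
  have h1 : (Q x : ℝ) ≠ 0 := by exact_mod_cast (by omega : Q x ≠ 0)
  rw [← prod_pow_eq, Usize, Nat.cast_prod, ← Finset.prod_div_distrib]
  refine Finset.prod_congr rfl fun i _ => ?_
  rw [Nat.cast_mul, Nat.cast_sub (Nat.one_le_pow _ _ (by omega))]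
  push_cast
  field_simp

lemma tendsto_Jbound {α : Type*} {l : Filter α} {Q K : α → ℕ} (e : ℕ) (he : 2 ≤ e)
    (hQ : ∀ᶠ x in l, 2 ≤ Q x) (hK : ∀ᶠ x in l, 2 ≤ K x)
    (h : Tendsto (fun x => (Q x : ℝ) ^ (K x - 1)) l atTop) :
    Tendsto (fun x => (Jbound (Q x) (3 ^ e * K x) (K x) : ℝ) /
      ((Q x : ℝ) ^ ((3 ^ e - 1) * K x) * (Q x : ℝ) ^ ((3 ^ e - 1) * K x))) l (nhds 1) := by
  have h3 : 3 ≤ 3 ^ e := Nat.le_self_pow (by omega) 3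
  obtain ⟨t, ht⟩ : ∃ t, 3 ^ e = t + 1 := ⟨3 ^ e - 1, by omega⟩
  have hg : Tendsto (fun x => (Q x : ℝ) ^ ((3 ^ e - 1) * K x)) l atTop := by
    refine tendsto_pow_of_le hQ (Eventually.of_forall fun x => ?_) h
    have : 1 * K x ≤ (3 ^ e - 1) * K x := Nat.mul_le_mul_right _ (by omega)
    omega
  have hA := tendsto_quot (a := fun x => 3 ^ e * K x) (b := K)
    (c := fun x => (3 ^ e - 1) * K x) hQ (Eventually.of_forall fun x => Nat.sub_le _ _)
    (Eventually.of_forall fun x => by simp only [ht, Nat.add_sub_cancel]; ring) h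
  have hB := tendsto_quot (a := fun x => 3 ^ e * K x - 1) (b := fun x => K x - 1)
    (c := fun x => (3 ^ e - 1) * K x) hQ (Eventually.of_forall fun x => le_rfl)
    (by
      filter_upwards [hK] with x hx
      simp only [ht, Nat.add_sub_cancel, add_mul, one_mul]
      omega) h
  have hAB := hA.mul (tendsto_floor_div hg hB)
  rw [one_mul] at hAB
  refine tendsto_floor_div (hg.atTop_mul_atTop₀ hg) (hAB.congr fun x => ?_)
  rw [div_mul_div_comm]

lemma tendsto_Jbound_div_Usize {α : Type*} {l : Filter α} {Q K : α → ℕ} (e : ℕ) (he : 2 ≤ e)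
    (hQ : ∀ᶠ x in l, 2 ≤ Q x) (hK : ∀ᶠ x in l, 2 ≤ K x)
    (h : Tendsto (fun x => (Q x : ℝ) ^ (K x - 1)) l atTop) :
    Tendsto (fun x => (Jbound (Q x) (3 ^ e * K x) (K x) : ℝ) / (Usize e (Q x) (K x) : ℝ))
      l (nhds 1) := by
  have ht := (tendsto_Jbound e he hQ hK h).div (tendsto_Usize e hQ h) one_ne_zero
  rw [div_one] at ht
  refine ht.congr' ?_
  filter_upwards [hQ] with x hx
  have h1 : (Q x : ℝ) ≠ 0 := by exact_mod_cast (by omega : Q x ≠ 0)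
  exact div_div_div_cancel_right₀ (by positivity) _ _

/-- The family of nested codes in `G_q(3^e k, k)` is asymptotically
optimal: `J_q(3^e k, 2k-2, k) / U(q,k) → 1`, both as `k → ∞` for every fixed `q ≥ 2`, and
as `q → ∞` for every fixed `k ≥ 2`. -/
theorem statement14 (e : ℕ) (he : 2 ≤ e) :
    (∀ q : ℕ, 2 ≤ q →
      Tendsto (fun k : ℕ =>
          (Jbound q (3 ^ e * k) k : ℝ) / (Usize e q k : ℝ))
        atTop (nhds 1)) ∧
    (∀ k : ℕ, 2 ≤ k →
      Tendsto (fun q : ℕ =>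
          (Jbound q (3 ^ e * k) k : ℝ) / (Usize e q k : ℝ))
        atTop (nhds 1)) := by
  refine ⟨fun q hq => ?_, fun k hk => ?_⟩
  · refine tendsto_Jbound_div_Usize (Q := fun _ => q) (K := fun k => k) e he
      (Eventually.of_forall fun _ => hq) (eventually_ge_atTop 2) ?_
    have hq1 : (1 : ℝ) < q := by exact_mod_cast (by omega : 1 < q)
    exact (tendsto_pow_atTop_atTop_of_one_lt hq1).comp (tendsto_sub_atTop_nat 1)
  · refine tendsto_Jbound_div_Usize (Q := fun q => q) (K := fun _ => k) e he
      (eventually_ge_atTop 2) (Eventually.of_forall fun _ => hk) ?_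
    exact (tendsto_pow_atTop (by omega)).comp tendsto_natCast_atTop_atTop
end

section
/- Fix an integer e ≥ 3, and for integers q ≥ 3 and k ≥ 2 set S(q,k) = ∏_{i=1}^{e} ⌊(q−1)/2⌋·(q^{2^i k}−1)/(q−1) and S₃(q,k) = q^k·((q^{(2^{e−1}−1)k}−1)/(q^k−1))·(q^{2^e k}−1). Then: (i) for every fixed integer q ≥ 3, the quotient S₃(q,k)/S(q,k) tends to 0 as k tends to infinity; (ii) for every fixed integer k ≥ 2, the quotient S₃(q,k)/S(q,k) tends to 0 as the integer q tends to infinity. Consequently, for n = 2^e k the size of the nested construction in G_q(n,k) grows asymptotically faster than the size q^k·((q^{(⌈(n/k)/2⌉−1)k}−1)/(q^k−1))·(q^n−1) of the previously known construction with the same parameters and minimum distance 2k−2. -/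
/-!
For `q ≥ 3` each factor of the product `S(q,k)` is at least `q^{2^i k} / 4`, so
`4^e · S(q,k) ≥ q^{(2^{e+1} - 2)k}` (`pow_le_Ssize`). Replacing the inner quotient of `S₃(q,k)` by its
numerator gives `S₃(q,k) ≤ q^{(2^{e-1} + 2^e)k}` (`S3two_le`). For `e ≥ 3` the two exponents differ
by `(2^{e-1} - 2)k ≥ k`, hence `S₃/S ≤ 4^e / q^k` (`ratio_le`), which tends to `0` in both regimes.
-/

open Filter

/-- Size of the nested Roth–Raviv–Tamo code in `G_q(2^e k, k)`:
`S(q,k) = ∏_{i=1}^{e} ⌊(q-1)/2⌋·(q^{2^i k}-1)/(q-1)`. -/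
def Ssize (e q k : ℕ) : ℕ :=
  ∏ i ∈ Finset.Icc 1 e, ((q - 1) / 2) * ((q ^ (2 ^ i * k) - 1) / (q - 1))

/-- Size of the previously known construction in `G_q(2^e k, k)`:
`S₃(q,k) = q^k·((q^{(2^{e-1}-1)k}-1)/(q^k-1))·(q^{2^e k}-1)`. -/
def S3two (e q k : ℕ) : ℕ :=
  q ^ k * ((q ^ ((2 ^ (e - 1) - 1) * k) - 1) / (q ^ k - 1)) * (q ^ (2 ^ e * k) - 1)

lemma pow_le_factor {q n : ℕ} (hq : 3 ≤ q) (hn : 1 ≤ n) :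
    q ^ n ≤ 4 * ((q - 1) / 2 * ((q ^ n - 1) / (q - 1))) := by
  -- The quotient is at least its leading geometric term `q ^ (n - 1)`, and `⌊(q - 1) / 2⌋ ≥ q / 4`.
  obtain ⟨m, rfl⟩ : ∃ m, n = m + 1 := ⟨n - 1, by omega⟩
  have h1 : q ^ m ≤ (q ^ (m + 1) - 1) / (q - 1) := by
    rw [Nat.le_div_iff_mul_le (by omega), Nat.mul_sub, pow_succ, mul_one]
    have : 1 ≤ q ^ m := Nat.one_le_pow _ _ (by omega)
    omega
  have h2 : q ≤ 4 * ((q - 1) / 2) := by omega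
  calc q ^ (m + 1) = q * q ^ m := by ring
    _ ≤ (4 * ((q - 1) / 2)) * ((q ^ (m + 1) - 1) / (q - 1)) := Nat.mul_le_mul h2 h1
    _ = _ := by ring

lemma pow_le_Ssize (e : ℕ) {q k : ℕ} (hq : 3 ≤ q) (hk : 1 ≤ k) :
    q ^ ((2 ^ (e + 1) - 2) * k) ≤ 4 ^ e * Ssize e q k := by
  induction e with
  | zero => simp [Ssize]
  | succ e ih =>
    have hS : Ssize (e + 1) q k = Ssize e q k *
        ((q - 1) / 2 * ((q ^ (2 ^ (e + 1) * k) - 1) / (q - 1))) := by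
      unfold Ssize
      rw [Finset.prod_Icc_succ_top (by omega)]
    have hexp : 2 ^ (e + 1 + 1) - 2 = (2 ^ (e + 1) - 2) + 2 ^ (e + 1) := by
      have : 2 ^ (e + 1 + 1) = 2 * 2 ^ (e + 1) := by ring
      have : 2 ^ (e + 1) = 2 * 2 ^ e := by ring
      have : 1 ≤ 2 ^ e := Nat.one_le_two_pow
      omega
    have hf := pow_le_factor (q := q) (n := 2 ^ (e + 1) * k) hq
      (Nat.mul_pos (by positivity) hk)
    rw [hexp, add_mul, pow_add, hS]
    calc _ ≤ _ := Nat.mul_le_mul ih hf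
      _ = _ := by ring

lemma S3two_le {e q k : ℕ} : S3two e q k ≤ q ^ ((2 ^ (e - 1) + 2 ^ e) * k) := by
  have hexp : (2 ^ (e - 1) + 2 ^ e) * k = k + (2 ^ (e - 1) - 1) * k + 2 ^ e * k := by
    obtain ⟨a, ha⟩ : ∃ a, 2 ^ (e - 1) = a + 1 :=
      ⟨2 ^ (e - 1) - 1, by have : 1 ≤ 2 ^ (e - 1) := Nat.one_le_two_pow; omega⟩
    rw [ha, Nat.add_sub_cancel]
    ring
  rw [hexp, pow_add, pow_add]
  unfold S3two
  gcongr
  · exact (Nat.div_le_self _ _).trans (Nat.sub_le _ _)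
  · exact Nat.sub_le _ _

lemma ratio_le {e q k : ℕ} (he : 3 ≤ e) (hq : 3 ≤ q) (hk : 1 ≤ k) :
    (S3two e q k : ℝ) / (Ssize e q k : ℝ) ≤ 4 ^ e / (q : ℝ) ^ k := by
  have hN : S3two e q k * q ^ k ≤ 4 ^ e * Ssize e q k := by
    refine le_trans (Nat.mul_le_mul_right _ S3two_le) ?_
    refine le_trans ?_ (pow_le_Ssize e hq hk)
    rw [← pow_add]
    refine Nat.pow_le_pow_right (by omega) ?_
    rw [← Nat.succ_mul]
    refine Nat.mul_le_mul_right _ ?_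
    obtain ⟨m, rfl⟩ : ∃ m, e = m + 3 := ⟨e - 3, by omega⟩
    have : 1 ≤ 2 ^ m := Nat.one_le_two_pow
    simp only [show m + 3 - 1 = m + 2 by omega, pow_succ]
    omega
  have hqk : 0 < q ^ k := Nat.pow_pos (by omega)
  have hS : 0 < Ssize e q k := by
    have := pow_le_Ssize e hq hk
    have : 0 < 4 ^ e * Ssize e q k := lt_of_lt_of_le (Nat.pow_pos (by omega)) this
    exact Nat.pos_of_mul_pos_left this
  rw [div_le_div_iff₀ (by exact_mod_cast hS) (by exact_mod_cast hqk)]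
  exact_mod_cast hN

/-- For `e ≥ 3`, the quotient `S₃(q,k)/S(q,k)` tends to `0` as `k → ∞`
for every fixed `q ≥ 3`, and as `q → ∞` for every fixed `k ≥ 2`: the nested construction
in `G_q(2^e k, k)` grows asymptotically faster than the previously known one. -/
theorem statement15 (e : ℕ) (he : 3 ≤ e) :
    (∀ q : ℕ, 3 ≤ q →
      Tendsto (fun k : ℕ => (S3two e q k : ℝ) / (Ssize e q k : ℝ))
        atTop (nhds 0)) ∧
    (∀ k : ℕ, 2 ≤ k →
      Tendsto (fun q : ℕ => (S3two e q k : ℝ) / (Ssize e q k : ℝ))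
        atTop (nhds 0)) := by
  constructor
  · intro q hq
    have hq1 : (1 : ℝ) < q := by exact_mod_cast (by omega : 1 < q)
    refine squeeze_zero' (Eventually.of_forall fun k => by positivity) ?_
      ((tendsto_pow_atTop_atTop_of_one_lt hq1).const_div_atTop ((4 : ℝ) ^ e))
    filter_upwards [eventually_ge_atTop 1] with k hk using ratio_le he hq hk
  · intro k hk
    refine squeeze_zero' (Eventually.of_forall fun q => by positivity) ?_
      (((tendsto_pow_atTop (α := ℝ) (by omega : k ≠ 0)).comp
        tendsto_natCast_atTop_atTop).const_div_atTop ((4 : ℝ) ^ e))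
    filter_upwards [eventually_ge_atTop 3] with q hq using ratio_le he hq (by omega)
end

section
/- Fix an odd prime p and an integer e ≥ 2, set r = p^e and h = (p^e−1)/2, and for integers q ≥ 2 and k ≥ 2 set V(q,k) = ∏_{i=1}^{e} q^{p^{i−1}k}·(q^{((p−1)/2)p^{i−1}k}−1)·(q^{p^i k}−1)/(q^{p^{i−1}k}−1), S₃(q,k) = q^k·((q^{hk}−1)/(q^k−1))·(q^{rk}−1), S₄(q,k) = h·((q^k−1)^h·(q^{rk}−1) + (q^k−1)^{h−1}·(q^{rk}−1)/(q−1)), and S₅(q,k) = h·q^k·(q^k−1)^{h−1}·(q^{rk}−1) + (q^{rk}−1)/(q^k−1). Then each of the quotients S₃(q,k)/V(q,k), S₄(q,k)/V(q,k) and S₅(q,k)/V(q,k) tends to 0 as k tends to infinity for every fixed integer q ≥ 2, and tends to 0 as the integer q tends to infinity for every fixed integer k ≥ 2. -/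
/-!
Everything is governed by `x = q ^ k`. Write `p = 2 m + 1` and `G = 1 + p + ⋯ + p ^ (e - 1)`, so that
`p ^ e = 2 m G + 1` and `h = m G`. Replacing each `x ^ a - 1` by its leading term up to a factor of `2`
gives `x ^ ((3 m + 1) G) ≤ 2 ^ e V` (`pow_le_Vsize`), while each `Sᵢ` is at most `2 h x ^ (h + r)` with
`h + r = 3 m G + 1` (`S3size_le`, `S4size_le`, `S5size_le`). Since `e ≥ 2` forces `G ≥ 2`, the exponent of
`V` is larger by at least one, hence `Sᵢ / V ≤ 2 h 2 ^ e / q ^ k`, which tends to `0` in both regimes.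
-/

open Filter

/-- Size of the nested code in `G_q(p^e k, k)`:
`V(q,k) = ∏_{i=1}^{e} q^{p^{i-1}k}·(q^{((p-1)/2)p^{i-1}k}-1)·(q^{p^i k}-1)/(q^{p^{i-1}k}-1)`. -/
def Vsize (p e q k : ℕ) : ℕ :=
  ∏ i ∈ Finset.Icc 1 e,
    q ^ (p ^ (i - 1) * k) * (q ^ ((p - 1) / 2 * (p ^ (i - 1) * k)) - 1) *
      ((q ^ (p ^ i * k) - 1) / (q ^ (p ^ (i - 1) * k) - 1))

/-- `S₃(q,k) = q^k·((q^{hk}-1)/(q^k-1))·(q^{rk}-1)`. -/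
def S3size (r h q k : ℕ) : ℕ :=
  q ^ k * ((q ^ (h * k) - 1) / (q ^ k - 1)) * (q ^ (r * k) - 1)

/-- `S₄(q,k) = h·((q^k-1)^h·(q^{rk}-1) + (q^k-1)^{h-1}·(q^{rk}-1)/(q-1))`. -/
def S4size (r h q k : ℕ) : ℕ :=
  h * ((q ^ k - 1) ^ h * (q ^ (r * k) - 1) +
    (q ^ k - 1) ^ (h - 1) * ((q ^ (r * k) - 1) / (q - 1)))

/-- `S₅(q,k) = h·q^k·(q^k-1)^{h-1}·(q^{rk}-1) + (q^{rk}-1)/(q^k-1)`. -/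
def S5size (r h q k : ℕ) : ℕ :=
  h * q ^ k * (q ^ k - 1) ^ (h - 1) * (q ^ (r * k) - 1) + (q ^ (r * k) - 1) / (q ^ k - 1)

lemma pow_le_two_mul_pow_sub_one {x a : ℕ} (hx : 2 ≤ x) (ha : 1 ≤ a) :
    x ^ a ≤ 2 * (x ^ a - 1) := by
  have h : x ^ 1 ≤ x ^ a := Nat.pow_le_pow_right (by omega) ha
  rw [pow_one] at h
  omega

lemma pow_le_quot {y m : ℕ} (hy : 2 ≤ y) :
    y ^ (2 * m) ≤ (y ^ (2 * m + 1) - 1) / (y - 1) := by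
  rw [Nat.le_div_iff_mul_le (by omega), Nat.mul_sub, ← pow_succ, mul_one]
  exact Nat.sub_le_sub_left (Nat.one_le_pow _ _ (by omega)) _

lemma quot_le {x n : ℕ} (hx : 2 ≤ x) :
    (x ^ (n + 1) - 1) / (x - 1) ≤ 2 * x ^ n := by
  apply Nat.div_le_of_le_mul
  obtain ⟨y, rfl⟩ := Nat.exists_eq_add_of_le hx
  have h1 : 2 + y - 1 = y + 1 := by omega
  rw [h1]
  refine (Nat.sub_le _ _).trans ?_
  rw [pow_succ]
  nlinarith [Nat.zero_le ((2 + y) ^ n), Nat.zero_le ((2 + y) ^ n * y)]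

lemma pow_eq_two_mul_geom (m e : ℕ) :
    (2 * m + 1) ^ e = 2 * (m * ∑ j ∈ Finset.range e, (2 * m + 1) ^ j) + 1 := by
  induction e with
  | zero => simp
  | succ e ih => rw [Finset.sum_range_succ, pow_succ, mul_add, mul_add]; linarith

/-- The lower bound for `V`: up to the constant `2 ^ e`, it is at least its leading term. -/
lemma pow_le_Vsize {m q k : ℕ} (hm : 1 ≤ m) (hx : 2 ≤ q ^ k) (e : ℕ) :
    (q ^ k) ^ ((3 * m + 1) * ∑ j ∈ Finset.range e, (2 * m + 1) ^ j)
      ≤ 2 ^ e * Vsize (2 * m + 1) e q k := by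
  induction e with
  | zero => simp [Vsize]
  | succ e ih =>
    have hy : 2 ≤ q ^ ((2 * m + 1) ^ e * k) := by
      rw [mul_comm, pow_mul]
      exact hx.trans (Nat.le_self_pow (by positivity) _)
    have hV : Vsize (2 * m + 1) (e + 1) q k = Vsize (2 * m + 1) e q k *
        (q ^ ((2 * m + 1) ^ e * k) * ((q ^ ((2 * m + 1) ^ e * k)) ^ m - 1) *
          (((q ^ ((2 * m + 1) ^ e * k)) ^ (2 * m + 1) - 1) /
            (q ^ ((2 * m + 1) ^ e * k) - 1))) := by
      unfold Vsize
      rw [Finset.prod_Icc_succ_top (by omega)]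
      have h1 : (2 * m + 1 - 1) / 2 = m := by omega
      have h2 : m * ((2 * m + 1) ^ e * k) = (2 * m + 1) ^ e * k * m := by ring
      have h3 : (2 * m + 1) ^ (e + 1) * k = (2 * m + 1) ^ e * k * (2 * m + 1) := by ring
      rw [h1, Nat.add_sub_cancel, ← pow_mul, ← pow_mul, h2, h3]
    have hL : (q ^ k) ^ ((3 * m + 1) * ∑ j ∈ Finset.range (e + 1), (2 * m + 1) ^ j)
        = (q ^ k) ^ ((3 * m + 1) * ∑ j ∈ Finset.range e, (2 * m + 1) ^ j) *
          (q ^ ((2 * m + 1) ^ e * k) * (q ^ ((2 * m + 1) ^ e * k)) ^ m *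
            (q ^ ((2 * m + 1) ^ e * k)) ^ (2 * m)) := by
      rw [Finset.sum_range_succ]
      simp only [← pow_mul, ← pow_add]
      congr 1
      ring
    rw [hV, hL]
    generalize q ^ ((2 * m + 1) ^ e * k) = y at hy ⊢
    calc _ ≤ (2 ^ e * Vsize (2 * m + 1) e q k) * (y * (2 * (y ^ m - 1)) *
          ((y ^ (2 * m + 1) - 1) / (y - 1))) := by
          gcongr
          · exact pow_le_two_mul_pow_sub_one hy hm
          · exact pow_le_quot hy
      _ = _ := by ring

lemma S3size_le {r h q k : ℕ} (hh : 1 ≤ h) (hx : 2 ≤ q ^ k) :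
    S3size r h q k ≤ 2 * h * (q ^ k) ^ (h + r) := by
  obtain ⟨n, rfl⟩ := Nat.exists_eq_add_of_le' hh
  unfold S3size
  rw [mul_comm (n + 1) k, mul_comm r k, pow_mul, pow_mul]
  generalize q ^ k = x at hx ⊢
  calc _ ≤ x * (2 * x ^ n) * x ^ r := by
        gcongr
        · exact quot_le hx
        · exact Nat.sub_le _ _
    _ = 2 * 1 * x ^ (n + 1 + r) := by ring
    _ ≤ _ := by gcongr

lemma S4size_le {r h q k : ℕ} (hx : 2 ≤ q ^ k) :
    S4size r h q k ≤ 2 * h * (q ^ k) ^ (h + r) := by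
  unfold S4size
  rw [mul_comm r k, pow_mul]
  generalize q ^ k = x at hx ⊢
  have h1 : (x - 1) ^ h ≤ x ^ h := Nat.pow_le_pow_left (Nat.sub_le _ _) _
  have h2 : (x - 1) ^ (h - 1) ≤ x ^ h :=
    (Nat.pow_le_pow_left (Nat.sub_le _ _) _).trans
      (Nat.pow_le_pow_right (by omega) (Nat.sub_le _ _))
  have h3 : x ^ r - 1 ≤ x ^ r := Nat.sub_le _ _
  calc _ ≤ h * (x ^ h * x ^ r + x ^ h * x ^ r) := by
        gcongr
        exact (Nat.div_le_self _ _).trans h3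
    _ = _ := by ring

lemma S5size_le {r h q k : ℕ} (hh : 1 ≤ h) (hx : 2 ≤ q ^ k) :
    S5size r h q k ≤ 2 * h * (q ^ k) ^ (h + r) := by
  obtain ⟨n, rfl⟩ := Nat.exists_eq_add_of_le' hh
  unfold S5size
  rw [mul_comm r k, pow_mul]
  generalize q ^ k = x at hx ⊢
  have h1 : (x - 1) ^ (n + 1 - 1) ≤ x ^ n := Nat.pow_le_pow_left (Nat.sub_le _ _) _
  have h3 : x ^ r - 1 ≤ x ^ r := Nat.sub_le _ _
  have h4 : 1 ≤ (n + 1) * x ^ (n + 1) :=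
    Nat.mul_pos (by omega) (Nat.pow_pos (by omega))
  calc _ ≤ (n + 1) * x * x ^ n * x ^ r + 1 * x ^ r := by
        gcongr
        rw [one_mul]
        exact (Nat.div_le_self _ _).trans h3
    _ ≤ (n + 1) * x * x ^ n * x ^ r + (n + 1) * x ^ (n + 1) * x ^ r := by gcongr
    _ = _ := by ring

/-- Anything bounded by `C x ^ (h + r)` is, relative to `V`, at most `C 2 ^ e / x`. -/
lemma div_Vsize_le {p e q k C S : ℕ} (hp : p.Prime) (hodd : Odd p) (he : 2 ≤ e) (hx : 2 ≤ q ^ k)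
    (hS : S ≤ C * (q ^ k) ^ ((p ^ e - 1) / 2 + p ^ e)) :
    (S : ℝ) / (Vsize p e q k : ℝ) ≤ ((C * 2 ^ e : ℕ) : ℝ) / ((q ^ k : ℕ) : ℝ) := by
  obtain ⟨m, rfl⟩ := hodd
  have hm : 1 ≤ m := by
    have := hp.two_le
    omega
  have hV := pow_le_Vsize hm hx e
  have hG : 2 ≤ ∑ j ∈ Finset.range e, (2 * m + 1) ^ j := by
    calc 2 = ∑ j ∈ Finset.range 2, 1 := by simp
      _ ≤ ∑ j ∈ Finset.range e, 1 := by simpa using he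
      _ ≤ _ := Finset.sum_le_sum fun j _ => Nat.one_le_pow _ _ (by omega)
  rw [pow_eq_two_mul_geom m e] at hS
  generalize ∑ j ∈ Finset.range e, (2 * m + 1) ^ j = G at hV hG hS
  have hexp : (2 * (m * G) + 1 - 1) / 2 + (2 * (m * G) + 1) + 1 ≤ (3 * m + 1) * G := by
    have : (2 * (m * G) + 1 - 1) / 2 = m * G := by omega
    rw [this]
    nlinarith
  have hVpos : 0 < Vsize (2 * m + 1) e q k := by
    by_contra h0
    have h0' : Vsize (2 * m + 1) e q k = 0 := by omega
    rw [h0', mul_zero] at hV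
    have : 0 < (q ^ k) ^ ((3 * m + 1) * G) := Nat.pow_pos (by omega)
    omega
  rw [div_le_div_iff₀ (by exact_mod_cast hVpos) (by exact_mod_cast (by omega : 0 < q ^ k))]
  norm_cast
  calc S * q ^ k ≤ C * (q ^ k) ^ ((2 * (m * G) + 1 - 1) / 2 + (2 * (m * G) + 1)) * q ^ k := by
        gcongr
    _ = C * (q ^ k) ^ ((2 * (m * G) + 1 - 1) / 2 + (2 * (m * G) + 1) + 1) := by
        rw [pow_succ _ (_ + _), mul_assoc]
    _ ≤ C * (q ^ k) ^ ((3 * m + 1) * G) := by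
        gcongr
        omega
    _ ≤ C * (2 ^ e * Vsize (2 * m + 1) e q k) := by gcongr
    _ = _ := by ring

/-- Both limits at once, for any family `S` of size at most `C x ^ (h + r)`. -/
lemma tendsto_div_Vsize {p e C : ℕ} (hp : p.Prime) (hodd : Odd p) (he : 2 ≤ e) (S : ℕ → ℕ → ℕ)
    (hS : ∀ q k, 2 ≤ q ^ k → S q k ≤ C * (q ^ k) ^ ((p ^ e - 1) / 2 + p ^ e)) :
    (∀ q : ℕ, 2 ≤ q →
        Tendsto (fun k : ℕ => (S q k : ℝ) / (Vsize p e q k : ℝ)) atTop (nhds 0)) ∧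
      (∀ k : ℕ, 2 ≤ k →
        Tendsto (fun q : ℕ => (S q k : ℝ) / (Vsize p e q k : ℝ)) atTop (nhds 0)) := by
  have key : ∀ Q K : ℕ → ℕ, Tendsto (fun n => Q n ^ K n) atTop atTop →
      Tendsto (fun n => (S (Q n) (K n) : ℝ) / (Vsize p e (Q n) (K n) : ℝ)) atTop (nhds 0) := by
    intro Q K h
    refine tendsto_of_tendsto_of_tendsto_of_le_of_le' tendsto_const_nhds
      ((tendsto_const_nhds (x := ((C * 2 ^ e : ℕ) : ℝ))).div_atTop
        (tendsto_natCast_atTop_atTop.comp h)) ?_ ?_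
    · exact Eventually.of_forall fun n => by positivity
    · filter_upwards [h.eventually_ge_atTop 2] with n hn
      exact div_Vsize_le hp hodd he hn (hS _ _ hn)
  refine ⟨fun q hq => key (fun _ => q) id ?_, fun k hk => key id (fun _ => k) ?_⟩
  · exact tendsto_pow_atTop_atTop_of_one_lt (by omega)
  · exact tendsto_pow_atTop (by omega)

/-- For an odd prime `p` and `e ≥ 2`, with `r = p^e` and
`h = (p^e-1)/2`, each of `S₃/V`, `S₄/V`, `S₅/V` tends to `0` as `k → ∞` for every fixed
`q ≥ 2`, and as `q → ∞` for every fixed `k ≥ 2`. -/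
theorem statement16 (p e : ℕ) (hp : p.Prime) (hodd : Odd p) (he : 2 ≤ e) :
    ((∀ q : ℕ, 2 ≤ q →
        Tendsto (fun k : ℕ =>
            (S3size (p ^ e) ((p ^ e - 1) / 2) q k : ℝ) / (Vsize p e q k : ℝ))
          atTop (nhds 0)) ∧
      (∀ k : ℕ, 2 ≤ k →
        Tendsto (fun q : ℕ =>
            (S3size (p ^ e) ((p ^ e - 1) / 2) q k : ℝ) / (Vsize p e q k : ℝ))
          atTop (nhds 0))) ∧
    ((∀ q : ℕ, 2 ≤ q →
        Tendsto (fun k : ℕ =>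
            (S4size (p ^ e) ((p ^ e - 1) / 2) q k : ℝ) / (Vsize p e q k : ℝ))
          atTop (nhds 0)) ∧
      (∀ k : ℕ, 2 ≤ k →
        Tendsto (fun q : ℕ =>
            (S4size (p ^ e) ((p ^ e - 1) / 2) q k : ℝ) / (Vsize p e q k : ℝ))
          atTop (nhds 0))) ∧
    ((∀ q : ℕ, 2 ≤ q →
        Tendsto (fun k : ℕ =>
            (S5size (p ^ e) ((p ^ e - 1) / 2) q k : ℝ) / (Vsize p e q k : ℝ))
          atTop (nhds 0)) ∧
      (∀ k : ℕ, 2 ≤ k →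
        Tendsto (fun q : ℕ =>
            (S5size (p ^ e) ((p ^ e - 1) / 2) q k : ℝ) / (Vsize p e q k : ℝ))
          atTop (nhds 0))) := by
  have hh : 1 ≤ (p ^ e - 1) / 2 := by
    have h3 : 3 ≤ p := by
      have := hp.two_le
      obtain ⟨m, rfl⟩ := hodd
      omega
    have : p ≤ p ^ e := Nat.le_self_pow (by omega) p
    omega
  exact ⟨tendsto_div_Vsize hp hodd he _ fun _ _ hx => S3size_le hh hx,
    tendsto_div_Vsize hp hodd he _ fun _ _ hx => S4size_le hx,
    tendsto_div_Vsize hp hodd he _ fun _ _ hx => S5size_le hh hx⟩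
end

section
/- Let k > 1 and let V ∈ G_q(n,k). If the one-orbit cyclic subspace code Orb(V) contains at least two distinct elements and its minimum distance equals 2k − 2, then Orb(V) has full-length, i.e., Stab(V) = F_q*. -/
/-!
The minimum distance `2k - 2` is attained by two distinct members `U`, `W` of the orbit, both of
dimension `k`, so `dim (U ∩ W) = 1`. Multiplication by any `β ∈ Stab(V)` commutes with the other
multiplications, hence maps `U` and `W` into themselves, and therefore also the line `U ∩ W`.
On a line it acts as a scalar `c ∈ F_q`; evaluating at a nonzero vector of the line gives `β = c`.
-/

open Module Submodule Filter

noncomputable section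

/-- For `α` in a field `F` and an `Fq`-subspace `V` of `F`,
the subspace `α·V = {α·v : v ∈ V}`. -/
def mulSub {Fq F : Type*} [Field Fq] [Field F] [Algebra Fq F]
    (α : F) (V : Submodule Fq F) : Submodule Fq F :=
  V.map (LinearMap.mulLeft Fq α)

/-- The orbit `Orb(V) = {α·V : α ∈ Fˣ}` of a subspace `V` under the Singer cycle. -/
def orb {Fq F : Type*} [Field Fq] [Field F] [Algebra Fq F]
    (V : Submodule Fq F) : Set (Submodule Fq F) :=
  {W | ∃ α : Fˣ, W = mulSub (α : F) V}

/-- The subspace distance `d(U,W) = dim(U+W) - dim(U∩W)`. -/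
def sdist {Fq F : Type*} [Field Fq] [Field F] [Algebra Fq F]
    (U W : Submodule Fq F) : ℕ :=
  finrank Fq ↥(U ⊔ W) - finrank Fq ↥(U ⊓ W)

/-- The minimum distance of a subspace code `C`:
the minimum of `d(U,W)` over distinct `U, W ∈ C`. -/
def minDist {Fq F : Type*} [Field Fq] [Field F] [Algebra Fq F]
    (C : Set (Submodule Fq F)) : ℕ :=
  sInf {d : ℕ | ∃ U ∈ C, ∃ W ∈ C, U ≠ W ∧ d = sdist U W}

/-- `Orb(V)` has full-length, i.e. the stabilizer of `V` is `Fq^*`: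
`β·V = V` with `β ≠ 0` forces `β ∈ Fq`. -/
def FullLengthOrbit {Fq F : Type*} [Field Fq] [Field F] [Algebra Fq F]
    (V : Submodule Fq F) : Prop :=
  ∀ β : F, β ≠ 0 → mulSub β V = V → β ∈ Set.range (algebraMap Fq F)

theorem mulSub_mem_of_mem_orb {Fq F : Type*} [Field Fq] [Field F] [Algebra Fq F]
    {V U : Submodule Fq F} (hU : U ∈ orb V) {β : F} (hβ : mulSub β V = V)
    {x : F} (hx : x ∈ U) : β * x ∈ U := by
  obtain ⟨α, rfl⟩ := hU
  obtain ⟨v, hv, rfl⟩ := hx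
  refine ⟨β * v, ?_, ?_⟩
  · have h : β * v ∈ mulSub β V := ⟨v, hv, rfl⟩
    rwa [hβ] at h
  · simp only [LinearMap.mulLeft_apply]
    ring

theorem finrank_of_mem_orb {Fq F : Type*} [Field Fq] [Field F] [Algebra Fq F]
    {V U : Submodule Fq F} (hU : U ∈ orb V) : finrank Fq U = finrank Fq V := by
  obtain ⟨α, rfl⟩ := hU
  exact (LinearEquiv.finrank_eq (Submodule.equivMapOfInjective _
    (mul_right_injective₀ α.ne_zero) V)).symm

theorem mulSub_algebraMap {Fq F : Type*} [Field Fq] [Field F] [Algebra Fq F]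
    (V : Submodule Fq F) {c : Fq} (hc : c ≠ 0) : mulSub (algebraMap Fq F c) V = V := by
  apply le_antisymm
  · rintro _ ⟨v, hv, rfl⟩
    rw [LinearMap.mulLeft_apply, ← Algebra.smul_def]
    exact V.smul_mem c hv
  · intro v hv
    refine ⟨c⁻¹ • v, V.smul_mem _ hv, ?_⟩
    rw [LinearMap.mulLeft_apply, ← Algebra.smul_def, smul_inv_smul₀ hc]

/-- If `Orb(V)` contains at least two distinct elements and its minimum
distance is `2k-2` (with `k > 1`), then `Orb(V)` has full-length:
`Stab(V) = F_q^*`. -/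
theorem statement17
    {Fq Fn : Type*} [Field Fq] [Field Fn] [Fintype Fq] [Algebra Fq Fn]
    (q n k : ℕ) (hq : Fintype.card Fq = q) (hk : 1 < k)
    (hdn : finrank Fq Fn = n)
    (V : Submodule Fq Fn) (hV : finrank Fq ↥V = k)
    (htwo : ∃ U ∈ orb V, ∃ W ∈ orb V, U ≠ W)
    (hd : minDist (orb V) = 2 * k - 2) :
    {β : Fn | β ≠ 0 ∧ mulSub β V = V} =
      {β : Fn | β ≠ 0 ∧ β ∈ Set.range (algebraMap Fq Fn)} := by
  have hpos : 0 < finrank Fq V := by omega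
  -- The ambient field may be infinite-dimensional, but orbit members have positive finite rank.
  have hfin : ∀ {X : Submodule Fq Fn}, X ∈ orb V → FiniteDimensional Fq X := fun hX =>
    FiniteDimensional.of_finrank_pos (by rw [finrank_of_mem_orb hX]; exact hpos)
  ext β
  simp only [Set.mem_ofPred_eq]
  refine and_congr_right fun hβ0 => ⟨fun hβ => ?_, ?_⟩
  · have hne : {d : ℕ | ∃ U ∈ orb V, ∃ W ∈ orb V, U ≠ W ∧ d = sdist U W}.Nonempty := by
      obtain ⟨U, hU, W, hW, hUW⟩ := htwo
      exact ⟨_, U, hU, W, hW, hUW, rfl⟩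
    obtain ⟨U, hU, W, hW, -, hdist⟩ := Nat.sInf_mem hne
    change minDist (orb V) = sdist U W at hdist
    rw [hd, sdist] at hdist
    have := hfin hU
    have := hfin hW
    have hsum := Submodule.finrank_sup_add_finrank_inf_eq U W
    have hle := Submodule.finrank_mono (inf_le_left : U ⊓ W ≤ U)
    rw [finrank_of_mem_orb hU] at hsum hle
    rw [finrank_of_mem_orb hW] at hsum
    have hone : finrank Fq ↥(U ⊓ W) = 1 := by omega
    obtain ⟨⟨x, hxU, hxW⟩, hx0, hspan⟩ := finrank_eq_one_iff'.mp hone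
    obtain ⟨c, hc⟩ := hspan ⟨β * x, mulSub_mem_of_mem_orb hU hβ hxU,
      mulSub_mem_of_mem_orb hW hβ hxW⟩
    have hx : x ≠ 0 := fun h => hx0 (Subtype.ext h)
    have hcx : c • x = β * x := congrArg Subtype.val hc
    rw [Algebra.smul_def] at hcx
    exact ⟨c, mul_right_cancel₀ hx hcx⟩
  · rintro ⟨c, rfl⟩
    exact mulSub_algebraMap V fun h => hβ0 (by rw [h, map_zero])
end
end
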